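/- arXiv:2512.07759 — 2 statements merged into one kernel-verified Lean document; each statement's English description precedes it below -/
import Mathlib

section
/- Let n ≥ 4 be even and let f ∈ Aut(F_n) be the automorphism with f(x_{2i−1}) = x_{2i} and f(x_{2i}) = x_{2i−1} for all 1 ≤ i ≤ n/2. Then N(f) = SAut(F_n) if det(f̄) = 1 and N(f) = Aut(F_n) if det(f̄) = −1; since det(f̄) = (−1)^{n/2}, this means N(f) = SAut(F_n) when n ≡ 0 (mod 4) and N(f) = Aut(F_n) when n ≡ 2 (mod 4). -/
open Matrix

namespace NormalClosurePaper

/-- The automorphism group of the free group on `n` generators. -/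
abbrev FrAut (n : ℕ) := MulAut (FreeGroup (Fin n))

/-- Exponent sum of the generator `x_i` in a word of the free group. -/
def expSum {n : ℕ} (i : Fin n) : FreeGroup (Fin n) →* Multiplicative ℤ :=
  FreeGroup.lift fun j => Multiplicative.ofAdd (if j = i then (1 : ℤ) else 0)

/-- The abelianized matrix of an automorphism of the free group:
the `(i, j)` entry is the exponent sum of `x_i` in `f x_j`. -/
def mat {n : ℕ} (f : FrAut n) : Matrix (Fin n) (Fin n) ℤ :=
  Matrix.of fun i j => (expSum i (f (FreeGroup.of j))).toAdd

lemma expSum_apply {n : ℕ} (f : FrAut n) (i : Fin n) (w : FreeGroup (Fin n)) :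
    (expSum i (f w)).toAdd = ∑ k, mat f i k * (expSum k w).toAdd := by
  induction w using FreeGroup.induction_on with
  | C1 => simp
  | of j =>
      have h : (expSum i (f (FreeGroup.of j))).toAdd = mat f i j := rfl
      rw [h]
      simp [expSum, mul_ite, Finset.sum_ite_eq]
  | inv_of j ih =>
      simp only [_root_.map_inv, toAdd_inv, mul_neg, Finset.sum_neg_distrib, ih]
  | mul x y ihx ihy =>
      simp only [_root_.map_mul, toAdd_mul, mul_add, Finset.sum_add_distrib, ihx, ihy]

lemma mat_one {n : ℕ} : mat (1 : FrAut n) = 1 := by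
  ext i j
  simp [mat, expSum, Matrix.one_apply, eq_comm]

lemma mat_mul {n : ℕ} (f g : FrAut n) : mat (f * g) = mat f * mat g := by
  ext i j
  rw [Matrix.mul_apply]
  show (expSum i ((f * g) (FreeGroup.of j))).toAdd = _
  rw [show (f * g) (FreeGroup.of j) = f (g (FreeGroup.of j)) from rfl, expSum_apply]
  rfl

/-- The matrix of the induced map on the abelianization, as a monoid homomorphism. -/
def matHom (n : ℕ) : FrAut n →* Matrix (Fin n) (Fin n) ℤ where
  toFun := mat
  map_one' := mat_one
  map_mul' := mat_mul

/-- The homomorphism `Aut(F_n) → GL_n(ℤ)` induced by abelianization. -/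
def ρ (n : ℕ) : FrAut n →* GL (Fin n) ℤ := (matHom n).toHomUnits

/-- The composition of `ρ` with the determinant. -/
def detρ (n : ℕ) : FrAut n →* ℤˣ := (Matrix.GeneralLinearGroup.det).comp (ρ n)

/-- The special automorphism group `SAut(F_n)`: automorphisms whose induced matrix
has determinant `1`. -/
def SAut (n : ℕ) : Subgroup (FrAut n) := (detρ n).ker

/-- The Torelli subgroup `IA_n`, the kernel of `ρ`. -/
def IA (n : ℕ) : Subgroup (FrAut n) := (ρ n).ker

/-- The group of inner automorphisms of the free group. -/
def Inn (n : ℕ) : Subgroup (FrAut n) := (MulAut.conj (G := FreeGroup (Fin n))).range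

instance Inn_normal (n : ℕ) : (Inn n).Normal := by
  constructor
  rintro - ⟨a, rfl⟩ g
  refine ⟨g a, ?_⟩
  ext y
  simp [MulAut.conj_apply, MulAut.mul_apply, _root_.map_mul, _root_.map_inv]

/-- The outer automorphism group `Out(F_n)`. -/
abbrev OutF (n : ℕ) := FrAut n ⧸ Inn n

/-- The projection `Aut(F_n) → Out(F_n)`. -/
def toOut (n : ℕ) : FrAut n →* OutF n := QuotientGroup.mk' (Inn n)

lemma mat_conj {n : ℕ} (g : FreeGroup (Fin n)) : mat (MulAut.conj g) = 1 := by
  rw [← mat_one (n := n)]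
  ext i j
  simp only [mat, Matrix.of_apply, MulAut.conj_apply, MulAut.one_apply, _root_.map_mul,
    _root_.map_inv, toAdd_mul, toAdd_inv]
  omega

lemma ρ_conj {n : ℕ} (g : FreeGroup (Fin n)) : ρ n (MulAut.conj g) = 1 :=
  Units.ext (mat_conj g)

/-- The homomorphism `Out(F_n) → GL_n(ℤ)` induced by abelianization. -/
def ρOut (n : ℕ) : OutF n →* GL (Fin n) ℤ :=
  QuotientGroup.lift (Inn n) (ρ n) (by rintro - ⟨g, rfl⟩; exact ρ_conj g)

/-- The composition of `ρOut` with the determinant. -/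
def detρOut (n : ℕ) : OutF n →* ℤˣ := (Matrix.GeneralLinearGroup.det).comp (ρOut n)

/-- The special outer automorphism group `SOut(F_n)`. -/
def SOut (n : ℕ) : Subgroup (OutF n) := (detρOut n).ker

/-- Entrywise reduction `GL_n(ℤ) → GL_n(ℤ/ℓℤ)`. -/
def redGL (n ℓ : ℕ) : GL (Fin n) ℤ →* GL (Fin n) (ZMod ℓ) :=
  Units.map (RingHom.mapMatrix (Int.castRingHom (ZMod ℓ))).toMonoidHom

/-- The subgroup `GΓ_n(ℓ)` of `GL_n(ℤ)` of matrices congruent to the identity mod `ℓ`. -/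
def GGamma (n ℓ : ℕ) : Subgroup (GL (Fin n) ℤ) := (redGL n ℓ).ker

/-- The level `ℓ` congruence subgroup `Γ_n(ℓ)` (viewed inside `GL_n(ℤ)`): matrices with
determinant `1` that are congruent to the identity mod `ℓ`. -/
def GammaGL (n ℓ : ℕ) : Subgroup (GL (Fin n) ℤ) :=
  GGamma n ℓ ⊓ (Matrix.GeneralLinearGroup.det).ker

/-- Reduction `SL_n(ℤ) → SL_n(ℤ/ℓℤ)`. -/
def redSL (n ℓ : ℕ) : Matrix.SpecialLinearGroup (Fin n) ℤ →*
    Matrix.SpecialLinearGroup (Fin n) (ZMod ℓ) :=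
  Matrix.SpecialLinearGroup.map (Int.castRingHom (ZMod ℓ))

/-- Projection `SL_n(ℤ/ℓℤ) → PSL_n(ℤ/ℓℤ)`. -/
def projPSL (n ℓ : ℕ) : Matrix.SpecialLinearGroup (Fin n) (ZMod ℓ) →*
    Matrix.ProjectiveSpecialLinearGroup (Fin n) (ZMod ℓ) :=
  QuotientGroup.mk' _

open FreeGroup

section Words

variable {α : Type*} [DecidableEq α]

/-- The length of the longest common initial segment of two lists. -/
def lcp {β : Type*} [DecidableEq β] : List β → List β → ℕ
  | a :: l, b :: m => if a = b then lcp l m + 1 else 0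
  | _, _ => 0

lemma le_lcp_iff {β : Type*} [DecidableEq β] (l m : List β) (k : ℕ) :
    k ≤ lcp l m ↔ k ≤ l.length ∧ k ≤ m.length ∧ l.take k = m.take k := by
  induction l generalizing m k with
  | nil => cases k <;> simp [lcp]
  | cons a l ih =>
    rcases m with _ | ⟨b, m⟩ <;> rcases k with _ | k <;> simp only [lcp] <;> try simp
    split_ifs with h
    · simp [h, ih]
    · simp [h]

/-- The length of the common initial segment of two elements of a free group
(their Gromov product). -/
def overlap (x y : FreeGroup α) : ℕ := lcp x.toWord y.toWord

lemma le_overlap_iff (x y : FreeGroup α) (k : ℕ) :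
    k ≤ overlap x y ↔ k ≤ x.norm ∧ k ≤ y.norm ∧ x.toWord.take k = y.toWord.take k :=
  le_lcp_iff _ _ _

lemma min_overlap_le (x y z : FreeGroup α) :
    min (overlap x y) (overlap y z) ≤ overlap x z := by
  have h₁ := (le_overlap_iff x y _).1 (min_le_left (overlap x y) (overlap y z))
  have h₂ := (le_overlap_iff y z _).1 (min_le_right (overlap x y) (overlap y z))
  exact (le_overlap_iff x z _).2 ⟨h₁.1, h₂.2.1, h₁.2.2.trans h₂.2.2⟩

lemma overlap_comm (x y : FreeGroup α) : overlap x y = overlap y x :=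
  eq_of_forall_le_iff fun k => by
    rw [le_overlap_iff, le_overlap_iff]
    tauto

lemma overlap_eq_of_lt {x y z : FreeGroup α} (h : overlap x y < overlap y z) :
    overlap x z = overlap x y := by
  have h₁ := min_overlap_le x y z
  have h₂ := min_overlap_le x z y
  rw [overlap_comm z y] at h₂
  omega

lemma isReduced_invRev {L : List (α × Bool)} (h : IsReduced L) : IsReduced (invRev L) := by
  rw [isReduced_iff_reduce_eq] at h ⊢
  rw [reduce_invRev, h]

lemma length_reduce_invRev_append (l m : List (α × Bool)) (hl : IsReduced l) (hm : IsReduced m) :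
    (reduce (invRev l ++ m)).length + 2 * lcp l m = l.length + m.length := by
  induction l generalizing m with
  | nil => simp [lcp, hm.reduce_eq]
  | cons a l ih =>
    rcases m with _ | ⟨b, m⟩
    · simp [lcp, (isReduced_invRev hl).reduce_eq]
    · simp only [lcp]
      split_ifs with h
      · subst h
        have h₁ : reduce (invRev (a :: l) ++ a :: m) = reduce (invRev l ++ m) := by
          apply reduce.sound
          rw [← mul_mk, ← mul_mk, ← inv_mk, ← inv_mk, ← List.singleton_append,
            ← List.singleton_append (l := m), ← mul_mk, ← mul_mk]
          group
        have := ih m (hl.infix (List.suffix_cons a l).isInfix)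
          (hm.infix (List.suffix_cons a m).isInfix)
        rw [h₁]
        simp only [List.length_cons]
        omega
      · have hred : IsReduced (invRev (a :: l) ++ b :: m) := by
          have e : invRev (a :: l) = invRev l ++ [(a.1, !a.2)] := by simp [invRev]
          have h₂ : IsReduced ([(a.1, !a.2)] ++ (b :: m)) := by
            rw [List.singleton_append, isReduced_cons_cons]
            refine ⟨fun hab => ?_, hm⟩
            have hab : a.1 = b.1 := hab
            by_contra hne
            refine h (Prod.ext hab ?_)
            cases ha : a.2 <;> cases hb : b.2 <;> simp_all
          have h₃ := isReduced_invRev hl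
          rw [e] at h₃ ⊢
          exact h₃.append_overlap h₂ (by simp)
        rw [hred.reduce_eq]
        simp

lemma norm_inv_mul_add (x y : FreeGroup α) :
    (x⁻¹ * y).norm + 2 * overlap x y = x.norm + y.norm := by
  simp only [FreeGroup.norm, overlap, toWord_mul, toWord_inv]
  exact length_reduce_invRev_append _ _ isReduced_toWord isReduced_toWord

lemma norm_mul_add (x y : FreeGroup α) :
    (x * y).norm + 2 * overlap x⁻¹ y = x.norm + y.norm := by
  simpa using norm_inv_mul_add x⁻¹ y

lemma norm_le_norm_mul_self (x : FreeGroup α) : x.norm ≤ (x * x).norm := by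
  have h₁ := reduceCyclically.reduce_flatten_replicate_succ (isReduced_toWord (x := x)) 0
  have h₂ := reduceCyclically.reduce_flatten_replicate_succ (isReduced_toWord (x := x)) 1
  have e₁ : x.toWord = reduce (List.replicate (0 + 1) x.toWord).flatten := by simp
  have e₂ : (x * x).toWord = reduce (List.replicate (1 + 1) x.toWord).flatten := by
    rw [← pow_two, toWord_pow]
  rw [FreeGroup.norm, FreeGroup.norm, e₂, h₂]
  conv_lhs => rw [e₁, h₁]
  simp

lemma toWord_mk_of_length_le {L : List (α × Bool)} (h : L.length ≤ (mk L).norm) :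
    (mk L).toWord = L := by
  rw [toWord_mk]
  exact (reduce.red (L := L)).sublist.eq_of_length_le h

/-- If `w` begins with the inverse of the second half of `v`, then multiplying `w` by `v` on the
left replaces this initial segment by the first half of `v`. -/
lemma toWord_mul_of_overlap {v w : FreeGroup α} {h : ℕ} (hv : v.norm = 2 * h)
    (ho : overlap v⁻¹ w = h) :
    (v * w).toWord = v.toWord.take h ++ w.toWord.drop h ∧
      w.toWord = v⁻¹.toWord.take h ++ w.toWord.drop h := by
  obtain ⟨h₁, h₂, h₃⟩ := (le_overlap_iff _ _ h).1 ho.ge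
  have e : w.toWord = v⁻¹.toWord.take h ++ w.toWord.drop h := by
    rw [h₃, List.take_append_drop]
  refine ⟨?_, e⟩
  have e₂ : v⁻¹.toWord.take h = invRev (v.toWord.drop h) := by
    rw [toWord_inv, invRev, invRev, List.take_reverse, List.map_drop]
    congr 2
    simp only [FreeGroup.norm] at hv
    simp [hv]
    omega
  have e₃ : v * w = mk (v.toWord.take h ++ w.toWord.drop h) := by
    have hw : w = (mk (v.toWord.drop h))⁻¹ * mk (w.toWord.drop h) := by
      rw [inv_mk, mul_mk, ← e₂, ← e, mk_toWord]
    have hv : v = mk (v.toWord.take h) * mk (v.toWord.drop h) := by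
      rw [mul_mk, List.take_append_drop, mk_toWord]
    conv_lhs => rw [hw]
    rw [← mul_mk]
    nth_rewrite 1 [hv]
    group
  rw [e₃]
  apply toWord_mk_of_length_le
  rw [← e₃]
  have := norm_mul_add v w
  simp only [FreeGroup.norm] at *
  simp only [List.length_append, List.length_take, List.length_drop]
  omega

end Words

section NielsenReduction

variable {n : ℕ}

/-- A numerical encoding of words which separates words of the same length. -/
def wordRank (L : List (Fin n × Bool)) : ℕ :=
  Nat.ofDigits (2 * n + 2) (L.map fun a => 2 * a.1.val + a.2.toNat)

lemma wordRank_append (L M : List (Fin n × Bool)) :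
    wordRank (L ++ M) = wordRank L + (2 * n + 2) ^ L.length * wordRank M := by
  simp [wordRank, Nat.ofDigits_append]

lemma wordRank_inj {L M : List (Fin n × Bool)} (hlen : L.length = M.length)
    (h : wordRank L = wordRank M) : L = M := by
  have hdigit : ∀ (N : List (Fin n × Bool)), ∀ d ∈ N.map (fun a => 2 * a.1.val + a.2.toNat),
      d < 2 * n + 2 := by
    intro N d hd
    obtain ⟨a, -, rfl⟩ := List.mem_map.1 hd
    have := a.1.isLt
    have := a.2.toNat_le
    omega
  have hmap := Nat.ofDigits_inj_of_len_eq (by omega) (by simpa using hlen) (hdigit L) (hdigit M) h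
  refine List.map_injective_iff.2 ?_ hmap
  rintro ⟨i, b⟩ ⟨j, c⟩ hij
  cases b <;> cases c <;> simp [Prod.ext_iff, Fin.ext_iff] at hij ⊢ <;> omega

/-- The rank of the initial halves of the reduced words of `x` and of `x⁻¹`. -/
def halfRank (x : FreeGroup (Fin n)) : ℕ :=
  wordRank (x.toWord.take (x.norm / 2)) + wordRank (x⁻¹.toWord.take (x.norm / 2))

/-- The complexity of an element of the free group used for Nielsen reduction:
its length, refined by the rank of its halves. -/
def weight (x : FreeGroup (Fin n)) : ℕ ×ₗ ℕ := toLex (x.norm, halfRank x)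

lemma weight_inv (x : FreeGroup (Fin n)) : weight x⁻¹ = weight x := by
  simp [weight, halfRank, norm_inv_eq, add_comm]

lemma norm_le_of_weight_le {x y : FreeGroup (Fin n)} (h : weight x ≤ weight y) :
    x.norm ≤ y.norm := by
  rcases Prod.Lex.le_iff.1 h with h | h
  · exact h.le
  · exact h.1.le

lemma wordRank_take_le {v w : FreeGroup (Fin n)} {h : ℕ} (hv : v.norm = 2 * h)
    (ho : overlap v⁻¹ w = h) (hw : 2 * h ≤ w.norm) (hle : weight w ≤ weight (v * w)) :
    wordRank (v⁻¹.toWord.take h) ≤ wordRank (v.toWord.take h) := by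
  obtain ⟨e₁, e₂⟩ := toWord_mul_of_overlap hv ho
  have hnorm : (v * w).norm = w.norm := by
    have := norm_mul_add v w
    omega
  have hrank : halfRank w ≤ halfRank (v * w) := by
    rcases Prod.Lex.le_iff.1 hle with hlt | heq
    · exact absurd hlt (by simp [weight, hnorm])
    · exact heq.2
  have hp : (v.toWord.take h).length = h := by
    simp only [FreeGroup.norm] at hv
    simp [hv]
    omega
  have hq : (v⁻¹.toWord.take h).length = h := by
    simp only [FreeGroup.norm] at hv
    simp [hv]
    omega
  set p := v.toWord.take h
  set q := v⁻¹.toWord.take h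
  set t := w.toWord.drop h
  have ht : t.length = w.norm - h := by simp [t, FreeGroup.norm]
  have left : ∀ r : List (Fin n × Bool), r.length = h →
      (r ++ t).take (w.norm / 2) = r ++ t.take (w.norm / 2 - h) := by
    intro r hr
    rw [List.take_append, hr, List.take_of_length_le (by omega)]
  have right : ∀ r : List (Fin n × Bool),
      (invRev (r ++ t)).take (w.norm / 2) = (invRev t).take (w.norm / 2) := by
    intro r
    rw [invRev_append, List.take_append_of_le_length (by rw [invRev_length]; omega)]
  rw [halfRank, halfRank, hnorm, toWord_inv, toWord_inv, e₁, e₂, right, right, left p hp,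
    left q hq, wordRank_append, wordRank_append, hp, hq] at hrank
  omega

/-- Two letters may follow each other in a reduced word. -/
def Compatible (a b : Fin n × Bool) : Prop := a.1 = b.1 → a.2 = b.2

/-- A symmetric family in the free group whose complexity cannot be lowered by replacing
a member by its product with another one. -/
structure IsMinimalFamily (U : Fin n × Bool → FreeGroup (Fin n)) : Prop where
  map_not : ∀ a, U (a.1, !a.2) = (U a)⁻¹
  ne_one : ∀ a, U a ≠ 1
  weight_le : ∀ a b, a.1 ≠ b.1 → weight (U b) ≤ weight (U a * U b)

namespace IsMinimalFamily

variable {U : Fin n × Bool → FreeGroup (Fin n)}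

lemma norm_le_right (hU : IsMinimalFamily U) {a b : Fin n × Bool} (hab : Compatible a b) :
    (U b).norm ≤ (U a * U b).norm := by
  by_cases h : a.1 = b.1
  · obtain rfl : a = b := Prod.ext h (hab h)
    exact norm_le_norm_mul_self _
  · exact norm_le_of_weight_le (hU.weight_le a b h)

lemma overlap_le_left (hU : IsMinimalFamily U) {a b : Fin n × Bool} (hab : Compatible a b) :
    2 * overlap (U a)⁻¹ (U b) ≤ (U a).norm := by
  have := hU.norm_le_right hab
  have := norm_mul_add (U a) (U b)
  omega

lemma compatible_not {a b : Fin n × Bool} (hab : Compatible a b) :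
    Compatible (b.1, !b.2) (a.1, !a.2) :=
  fun h => congrArg not (hab (Eq.symm h)).symm

lemma overlap_le_right (hU : IsMinimalFamily U) {a b : Fin n × Bool} (hab : Compatible a b) :
    2 * overlap (U a)⁻¹ (U b) ≤ (U b).norm := by
  have h := hU.overlap_le_left (compatible_not hab)
  rwa [hU.map_not, hU.map_not, inv_inv, overlap_comm, norm_inv_eq] at h

lemma wordRank_le (hU : IsMinimalFamily U) {a b : Fin n × Bool} (hab : Compatible a b) {h : ℕ}
    (hv : (U a).norm = 2 * h) (ho : overlap (U a)⁻¹ (U b) = h) :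
    wordRank ((U a)⁻¹.toWord.take h) ≤ wordRank ((U a).toWord.take h) := by
  by_cases hne : a.1 = b.1
  · obtain rfl : a = b := Prod.ext hne (hab hne)
    rw [((le_overlap_iff _ _ h).1 ho.ge).2.2]
  · exact wordRank_take_le hv ho (ho ▸ hU.overlap_le_right hab) (hU.weight_le a b hne)

lemma overlap_add_lt (hU : IsMinimalFamily U) {a b c : Fin n × Bool} (hab : Compatible a b)
    (hbc : Compatible b c) :
    overlap (U a)⁻¹ (U b) + overlap (U b)⁻¹ (U c) < (U b).norm := by
  by_contra! hle
  have h₁ := hU.overlap_le_right hab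
  have h₂ := hU.overlap_le_left hbc
  obtain ⟨h, hh⟩ : ∃ h, overlap (U b)⁻¹ (U c) = h := ⟨_, rfl⟩
  have hv : (U b).norm = 2 * h := by omega
  have r₁ := hU.wordRank_le hbc hv hh
  have r₂ := hU.wordRank_le (h := h) (compatible_not hab) (by rw [hU.map_not, norm_inv_eq, hv])
    (by rw [hU.map_not, hU.map_not, inv_inv, overlap_comm]; omega)
  rw [hU.map_not, inv_inv] at r₂
  have heq := wordRank_inj (by simp) (le_antisymm r₁ r₂)
  have hge : h ≤ overlap (U b)⁻¹ (U b) :=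
    (le_overlap_iff _ _ _).2 ⟨by rw [norm_inv_eq]; omega, by omega, heq⟩
  have hself := norm_le_norm_mul_self (U b)
  have hadd := norm_mul_add (U b) (U b)
  have hw := (toWord_mul_of_overlap (w := U b) hv (by omega)).1
  rw [List.take_append_drop, toWord_inj] at hw
  exact hU.ne_one b (by simpa using hw)

lemma prod_bounds (hU : IsMinimalFamily U) (l : List (Fin n × Bool)) (a b : Fin n × Bool)
    (hl : IsReduced (a :: l)) (hba : Compatible b a) :
    overlap (U b)⁻¹ ((a :: l).map U).prod = overlap (U b)⁻¹ (U a) ∧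
      (a :: l).length + overlap (U b)⁻¹ (U a) ≤ ((a :: l).map U).prod.norm := by
  induction l generalizing a b with
  | nil =>
    have h₁ := hU.overlap_le_right hba
    have h₂ : (U a).norm ≠ 0 := fun h => hU.ne_one a (norm_eq_zero.1 h)
    simp
    omega
  | cons c l ih =>
    obtain ⟨hac, hcl⟩ := isReduced_cons_cons.1 hl
    obtain ⟨ih₁, ih₂⟩ := ih c a hcl hac
    have hlt := hU.overlap_add_lt hba hac
    rw [List.map_cons, List.prod_cons]
    set Q := ((c :: l).map U).prod
    have e₁ := norm_mul_add (U a) Q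
    have e₂ := norm_inv_mul_add (U a) (U a * Q)
    rw [inv_mul_cancel_left] at e₂
    have hov : overlap (U b)⁻¹ (U a * Q) = overlap (U b)⁻¹ (U a) :=
      overlap_eq_of_lt (by omega)
    refine ⟨hov, ?_⟩
    rw [List.length_cons]
    omega

lemma length_le_norm_prod (hU : IsMinimalFamily U) (l : List (Fin n × Bool))
    (hl : IsReduced l) : l.length ≤ (l.map U).prod.norm := by
  rcases l with _ | ⟨a, l⟩
  · simp
  · have := (hU.prod_bounds l a a hl fun _ => rfl).2
    omega

end IsMinimalFamily

end NielsenReduction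

section Generators

variable {n : ℕ}

lemma frAut_ext {f g : FrAut n} (h : ∀ i, f (of i) = g (of i)) : f = g :=
  MulEquiv.toMonoidHom_injective (FreeGroup.ext_hom _ _ h)

/-- The automorphism permuting the generators. -/
def permAut : Equiv.Perm (Fin n) →* FrAut n where
  toFun σ := freeGroupCongr σ
  map_one' := frAut_ext fun i => by simp
  map_mul' σ τ := frAut_ext fun i => by simp

@[simp]
lemma permAut_of (σ : Equiv.Perm (Fin n)) (i : Fin n) : permAut σ (of i) = of (σ i) := by
  simp [permAut]

/-- The automorphism inverting the generator `x_i`. -/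
def inversion (i : Fin n) : FrAut n :=
  MonoidHom.toMulEquiv (FreeGroup.lift fun k => if k = i then (of k)⁻¹ else of k)
    (FreeGroup.lift fun k => if k = i then (of k)⁻¹ else of k)
    (by ext k; by_cases h : k = i <;> simp [h])
    (by ext k; by_cases h : k = i <;> simp [h])

lemma inversion_of (i k : Fin n) :
    inversion i (of k) = if k = i then (of k)⁻¹ else of k := by
  simp [inversion]

@[simp]
lemma inversion_mul_self (i : Fin n) : inversion i * inversion i = 1 :=
  frAut_ext fun k => by by_cases h : k = i <;> simp [inversion_of, h]

@[simp]
lemma inversion_inv (i : Fin n) : (inversion i)⁻¹ = inversion i :=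
  inv_eq_of_mul_eq_one_left (inversion_mul_self i)

/-- The transvection sending `x_j` to `x_i x_j`. -/
def transv (i j : Fin n) (h : i ≠ j) : FrAut n :=
  MonoidHom.toMulEquiv (FreeGroup.lift fun k => if k = j then of i * of k else of k)
    (FreeGroup.lift fun k => if k = j then (of i)⁻¹ * of k else of k)
    (by ext k; by_cases hk : k = j <;> simp [hk, h])
    (by ext k; by_cases hk : k = j <;> simp [hk, h])

lemma transv_of {i j : Fin n} (h : i ≠ j) (k : Fin n) :
    transv i j h (of k) = if k = j then of i * of k else of k := by
  simp [transv]

lemma transv_symm_of {i j : Fin n} (h : i ≠ j) (k : Fin n) :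
    (transv i j h).symm (of k) = if k = j then (of i)⁻¹ * of k else of k := by
  simp [transv]

lemma mk_true (i : Fin n) : mk [(i, true)] = of i := rfl

lemma mk_false (i : Fin n) : mk [(i, false)] = (of i)⁻¹ := rfl

lemma mk_not (a : Fin n × Bool) : mk [(a.1, !a.2)] = (mk [a])⁻¹ := rfl

lemma weight_apply_mk (ψ : FrAut n) (a : Fin n × Bool) :
    weight (ψ (mk [a])) = weight (ψ (of a.1)) := by
  rcases a with ⟨i, _ | _⟩
  · rw [mk_false, _root_.map_inv, weight_inv]
  · rw [mk_true]

lemma exists_nielsen_move (K : Subgroup (FrAut n)) (hT : ∀ i j h, transv i j h ∈ K)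
    (hI : ∀ i, inversion i ∈ K) (a b : Fin n × Bool) (hab : a.1 ≠ b.1) :
    ∃ T ∈ K, T (mk [b]) = mk [a] * mk [b] ∧ ∀ k ≠ b.1, T (of k) = of k := by
  obtain ⟨i, s⟩ := a
  obtain ⟨j, t⟩ := b
  have hij : i ≠ j := hab
  have hTK := hT i j hij
  have hIK := hI j
  rcases s <;> rcases t <;> simp only [mk_true, mk_false]
  · exact ⟨inversion j * (transv i j hij)⁻¹ * inversion j,
      K.mul_mem (K.mul_mem hIK (K.inv_mem hTK)) hIK,
      by simp [inversion_of, transv_symm_of, hij],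
      fun k hk => by simp [inversion_of, transv_symm_of, hk]⟩
  · exact ⟨(transv i j hij)⁻¹, K.inv_mem hTK, by simp [transv_symm_of],
      fun k hk => by simp [transv_symm_of, hk]⟩
  · exact ⟨inversion j * transv i j hij * inversion j, K.mul_mem (K.mul_mem hIK hTK) hIK,
      by simp [inversion_of, transv_of, hij], fun k hk => by simp [inversion_of, transv_of, hk]⟩
  · exact ⟨transv i j hij, hTK, by simp [transv_of], fun k hk => by simp [transv_of, hk]⟩

lemma apply_mk_eq_prod (ψ : FrAut n) (l : List (Fin n × Bool)) :
    ψ (mk l) = (l.map fun a => ψ (mk [a])).prod := by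
  induction l with
  | nil => exact _root_.map_one ψ
  | cons a l ih =>
    rw [List.map_cons, List.prod_cons, ← ih, ← _root_.map_mul, mul_mk, List.singleton_append]

lemma mem_of_apply_of_eq_ite (K : Subgroup (FrAut n)) (hI : ∀ i, inversion i ∈ K)
    (s : Finset (Fin n)) (g : FrAut n)
    (hg : ∀ i, g (of i) = if i ∈ s then (of i)⁻¹ else of i) : g ∈ K := by
  induction s using Finset.induction_on generalizing g with
  | empty =>
    rw [show g = 1 from frAut_ext fun i => by simp [hg]]
    exact K.one_mem
  | insert a s ha ih =>
    rw [← K.mul_mem_cancel_right (hI a)]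
    refine ih _ fun i => ?_
    by_cases h : i = a
    · subst h
      simp [inversion_of, hg, ha]
    · simp [inversion_of, hg, h]

lemma mem_of_apply_of_eq_mk (K : Subgroup (FrAut n)) (hI : ∀ i, inversion i ∈ K)
    (hP : ∀ σ, permAut σ ∈ K) (g : FrAut n) (s : Fin n → Fin n × Bool)
    (hg : ∀ i, g (of i) = mk [s i]) : g ∈ K := by
  have hinj : Function.Injective fun i => (s i).1 := by
    intro i j hij
    have hij : (s i).1 = (s j).1 := hij
    by_cases h : (s i).2 = (s j).2
    · have : g (of i) = g (of j) := by rw [hg, hg, Prod.ext hij h]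
      exact of_injective (g.injective this)
    · have e : s i = ((s j).1, !(s j).2) := Prod.ext hij (Bool.eq_not.2 h)
      have : g (of i) = g (of j)⁻¹ := by rw [_root_.map_inv, hg, hg, e, mk_not]
      have := congrArg toWord (g.injective this)
      simp [toWord_inv, invRev] at this
  let σ : Equiv.Perm (Fin n) := Equiv.ofBijective _ (Finite.injective_iff_bijective.1 hinj)
  have hσ : ∀ i, σ.symm (s i).1 = i := fun i => σ.symm_apply_apply i
  rw [← K.mul_mem_cancel_left (hP σ⁻¹)]
  refine mem_of_apply_of_eq_ite K hI (Finset.univ.filter fun i => (s i).2 = false) _ fun i => ?_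
  rw [MulAut.mul_apply, hg]
  rcases hs : s i with ⟨j, _ | _⟩
  · have := hσ i
    rw [hs] at this
    simp [mk_false, hs, Equiv.Perm.inv_def, this]
  · have := hσ i
    rw [hs] at this
    simp [mk_true, hs, Equiv.Perm.inv_def, this]

/-- **Nielsen's theorem**: `Aut(F_n)` is generated by transvections, inversions and permutations
of the generators. -/
theorem eq_top_of_nielsen_mem (K : Subgroup (FrAut n)) (hT : ∀ i j h, transv i j h ∈ K)
    (hI : ∀ i, inversion i ∈ K) (hP : ∀ σ, permAut σ ∈ K) : K = ⊤ := by
  refine (Subgroup.eq_top_iff' K).2 fun φ => ?_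
  let m : FrAut n → ℕ ×ₗ ℕ := fun ψ => ∑ i, weight (ψ (of i))
  obtain ⟨-, ⟨k, hk, rfl⟩, hmin⟩ := (wellFounded_lt (α := ℕ ×ₗ ℕ)).has_min
    (Set.image (fun k => m (φ * k)) K) ⟨_, 1, K.one_mem, rfl⟩
  rw [← K.mul_mem_cancel_right hk]
  set ψ := φ * k
  have hU : IsMinimalFamily fun a => ψ (mk [a]) := by
    refine ⟨fun a => ?_, fun a h => ?_, fun a b hab => ?_⟩
    · rw [mk_not, _root_.map_inv]
    · have := congrArg toWord (ψ.injective (h.trans (_root_.map_one ψ).symm))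
      simp at this
    · obtain ⟨T, hTK, hTb, hTk⟩ := exists_nielsen_move K hT hI a b hab
      by_contra! hlt
      have hlt : weight (ψ (mk [a]) * ψ (mk [b])) < weight (ψ (mk [b])) := hlt
      rw [← _root_.map_mul, ← hTb, ← MulAut.mul_apply, weight_apply_mk, weight_apply_mk] at hlt
      refine hmin _ ⟨k * T, K.mul_mem hk hTK, rfl⟩ ?_
      change m (φ * (k * T)) < m ψ
      rw [← mul_assoc]
      refine Finset.sum_lt_sum (fun i _ => ?_) ⟨b.1, Finset.mem_univ _, hlt⟩
      by_cases hi : i = b.1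
      · exact hi ▸ hlt.le
      · rw [MulAut.mul_apply, hTk i hi]
  have hgen : ∀ j, ∃ a, ψ⁻¹ (of j) = mk [a] := by
    intro j
    have hlen := hU.length_le_norm_prod _ (isReduced_toWord (x := ψ⁻¹ (of j)))
    rw [← apply_mk_eq_prod, mk_toWord, ← MulAut.mul_apply, mul_inv_cancel, MulAut.one_apply,
      norm_of] at hlen
    rcases hl : (ψ⁻¹ (of j)).toWord with _ | ⟨a, _ | ⟨b, l⟩⟩
    · rw [toWord_eq_nil_iff, map_eq_one_iff _ (ψ⁻¹).injective] at hl
      exact absurd hl (of_ne_one j)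
    · exact ⟨a, by rw [← hl, mk_toWord]⟩
    · rw [hl] at hlen
      simp at hlen
  choose s hs using hgen
  exact K.inv_mem_iff.1 (mem_of_apply_of_eq_mk K hI hP ψ⁻¹ s hs)

end Generators

section Relations

variable {n : ℕ}

lemma permAut_mul_inversion (σ : Equiv.Perm (Fin n)) (i : Fin n) :
    permAut σ * inversion i = inversion (σ i) * permAut σ :=
  frAut_ext fun k => by by_cases h : k = i <;> simp [inversion_of, h]

lemma permAut_mul_transv (σ : Equiv.Perm (Fin n)) {i j : Fin n} (h : i ≠ j) :
    permAut σ * transv i j h = transv (σ i) (σ j) (σ.injective.ne h) * permAut σ :=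
  frAut_ext fun k => by by_cases h : k = j <;> simp [transv_of, h]

lemma transv_mul_transv {a b c : Fin n} (hab : a ≠ b) (hca : c ≠ a) (hcb : c ≠ b) :
    transv c a hca * transv a b hab = transv a b hab * transv c b hcb * transv c a hca := by
  refine frAut_ext fun k => ?_
  by_cases h₁ : k = a
  · subst h₁
    simp [transv_of, hab, hcb]
  · by_cases h₂ : k = b
    · subst h₂
      simp [transv_of, h₁, hcb, mul_assoc]
    · simp [transv_of, h₁, h₂]

/-- The transvection sending `x_a` to `x_a x_b` commutes with the one sending `x_a` to `x_c x_a`. -/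
lemma commute_transv_conj {a b c : Fin n} (hba : b ≠ a) (hca : c ≠ a) (hcb : c ≠ b) :
    Commute (transv c a hca)
      (inversion a * inversion b * transv b a hba * (inversion a * inversion b)) := by
  refine frAut_ext fun k => ?_
  by_cases h₁ : k = a
  · subst h₁
    simp [transv_of, inversion_of, hba, hba.symm, hca, hcb, mul_assoc]
  · by_cases h₂ : k = b
    · subst h₂
      simp [transv_of, inversion_of, h₁]
    · simp [transv_of, inversion_of, h₁, h₂]

lemma permAut_swap_mul_inversion {i j : Fin n} (h : i ≠ j) :
    permAut (Equiv.swap i j) * inversion i = transv i j h * (transv j i h.symm)⁻¹ *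
      (inversion j * (transv i j h)⁻¹ * (inversion j)⁻¹) := by
  refine frAut_ext fun k => ?_
  by_cases h₁ : k = i
  · subst h₁
    simp [transv_of, transv_symm_of, inversion_of, h]
  · by_cases h₂ : k = j
    · subst h₂
      simp [transv_of, transv_symm_of, inversion_of, h, h.symm]
    · simp [transv_of, transv_symm_of, inversion_of, h₁, h₂, Equiv.swap_apply_of_ne_of_ne]

lemma exists_perm_apply_eq {a b i j : Fin n} (hab : a ≠ b) (hij : i ≠ j) :
    ∃ σ : Equiv.Perm (Fin n), σ a = i ∧ σ b = j := by
  refine ⟨Equiv.swap (Equiv.swap a i b) j * Equiv.swap a i, ?_, by simp⟩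
  have : i ≠ Equiv.swap a i b := fun h =>
    hab ((Equiv.swap a i).injective ((Equiv.swap_apply_left a i).trans h))
  simp [Equiv.swap_apply_of_ne_of_ne this hij]

lemma coe_detρ (f : FrAut n) : ((detρ n f : ℤˣ) : ℤ) = (mat f).det := rfl

lemma detρ_inversion (i : Fin n) : detρ n (inversion i) = -1 := by
  have h : mat (inversion i) = Matrix.diagonal fun k => if k = i then (-1 : ℤ) else 1 := by
    ext k l
    by_cases h₁ : k = l
    · subst h₁
      by_cases h₂ : k = i <;> simp [mat, expSum, inversion_of, h₂]
    · have h₁' : ¬l = k := fun h => h₁ h.symm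
      by_cases h₂ : l = i
      · subst h₂
        simp [mat, expSum, inversion_of, h₁, h₁']
      · simp [mat, expSum, inversion_of, h₁, h₁', h₂]
  apply Units.ext
  rw [coe_detρ, h, Matrix.det_diagonal, Finset.prod_ite_eq']
  simp

lemma detρ_permAut (σ : Equiv.Perm (Fin n)) : detρ n (permAut σ) = Equiv.Perm.sign σ := by
  have h : mat (permAut σ) = (σ.permMatrix ℤ)ᵀ := by
    ext i j
    simp [mat, expSum, PEquiv.toMatrix_apply]
  apply Units.ext
  rw [coe_detρ, h, Matrix.det_transpose, Matrix.det_permutation]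
  simp

lemma detρ_transv {a b c : Fin n} (hab : a ≠ b) (hca : c ≠ a) (hcb : c ≠ b) :
    detρ n (transv c b hcb) = 1 := by
  have h := congrArg (detρ n) (transv_mul_transv hab hca hcb)
  rw [_root_.map_mul, _root_.map_mul, _root_.map_mul, mul_assoc, mul_comm] at h
  simpa using mul_left_cancel h

end Relations

section NormalSubgroups

variable {n : ℕ} {N : Subgroup (FrAut n)} [N.Normal]

lemma inversion_mul_inversion_mem {a b c d : Fin n} (hac : a ≠ c) (had : a ≠ d)
    (hN : permAut (Equiv.swap a b * Equiv.swap c d) ∈ N) :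
    inversion a * inversion b ∈ N := by
  have h := N.mul_mem (Subgroup.Normal.conj_mem ‹_› _ hN (inversion a)) (N.inv_mem hN)
  rwa [inversion_inv, mul_assoc (inversion a), permAut_mul_inversion, ← mul_assoc,
    mul_inv_cancel_right, Equiv.Perm.mul_apply, Equiv.swap_apply_of_ne_of_ne hac had,
    Equiv.swap_apply_left] at h

lemma transv_mem_of_double_swap_mem {a b c d : Fin n} (hab : a ≠ b) (hac : a ≠ c) (had : a ≠ d)
    (hbc : b ≠ c) (hbd : b ≠ d) (hN : permAut (Equiv.swap a b * Equiv.swap c d) ∈ N) :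
    transv c b hbc.symm ∈ N := by
  let q := QuotientGroup.mk' N
  have q_eq_one : ∀ {g}, g ∈ N → q g = 1 := fun hg => (QuotientGroup.eq_one_iff _).2 hg
  have hI := q_eq_one (inversion_mul_inversion_mem hac had hN)
  have h₁ : q (transv a b hab) = q (transv b a hab.symm) := by
    have h := congrArg q (permAut_mul_transv (Equiv.swap a b * Equiv.swap c d) hab)
    rw [_root_.map_mul q, _root_.map_mul q, q_eq_one hN, one_mul, mul_one] at h
    simpa [Equiv.swap_apply_of_ne_of_ne, hac, had, hbc, hbd] using h
  have h₂ := congrArg q (commute_transv_conj hab.symm hac.symm hbc.symm).eq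
  have h₃ := congrArg q (transv_mul_transv hab hac.symm hbc.symm)
  simp only [_root_.map_mul] at hI h₂ h₃
  simp only [hI, one_mul, mul_one] at h₂
  rw [h₁, h₂, mul_assoc] at h₃
  have h₄ : q (transv c b hbc.symm) = 1 := by simpa using mul_left_cancel h₃
  exact (QuotientGroup.eq_one_iff _).1 h₄

lemma transv_mem_of_transv_mem {i j : Fin n} (hij : i ≠ j) (h : transv i j hij ∈ N)
    (k l : Fin n) (hkl : k ≠ l) : transv k l hkl ∈ N := by
  obtain ⟨σ, rfl, rfl⟩ := exists_perm_apply_eq hij hkl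
  have := Subgroup.Normal.conj_mem ‹_› _ h (permAut σ)
  rwa [permAut_mul_transv, mul_inv_cancel_right] at this

lemma inversion_mul_inversion_mem_of_mem {i j : Fin n} (hij : i ≠ j)
    (h : inversion i * inversion j ∈ N) (k l : Fin n) : inversion k * inversion l ∈ N := by
  by_cases hkl : k = l
  · subst hkl
    rw [inversion_mul_self]
    exact N.one_mem
  · obtain ⟨σ, rfl, rfl⟩ := exists_perm_apply_eq hij hkl
    have := Subgroup.Normal.conj_mem ‹_› _ h (permAut σ)
    rwa [← mul_assoc, permAut_mul_inversion, mul_assoc (inversion (σ i)), permAut_mul_inversion,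
      ← mul_assoc, mul_inv_cancel_right] at this

/-- A normal subgroup of `SAut(F_n)`, normal in `Aut(F_n)`, containing the transvections and the
products of two inversions is all of `SAut(F_n)`. -/
lemma SAut_le_of_transv_mem (a : Fin n) (hle : N ≤ SAut n) (hT : ∀ i j h, transv i j h ∈ N)
    (hI : ∀ i j, inversion i * inversion j ∈ N) : SAut n ≤ N := by
  let q := QuotientGroup.mk' N
  let K := (Subgroup.zpowers (q (inversion a))).comap q
  have hNK : N ≤ K := fun g hg => by
    rw [Subgroup.mem_comap, show q g = 1 from (QuotientGroup.eq_one_iff _).2 hg]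
    exact Subgroup.one_mem _
  have hIK : ∀ i, inversion i ∈ K := fun i =>
    (K.mul_mem_cancel_right (Subgroup.mem_zpowers (q (inversion a)))).1 (hNK (hI i a))
  have hPK : ∀ σ, permAut σ ∈ K := by
    intro σ
    induction σ using Equiv.Perm.swap_induction_on with
    | one => rw [_root_.map_one]; exact K.one_mem
    | swap_mul σ i j hij ih =>
      rw [_root_.map_mul, K.mul_mem_cancel_right ih, ← K.mul_mem_cancel_right (hIK i),
        permAut_swap_mul_inversion hij]
      exact hNK (N.mul_mem (N.mul_mem (hT i j _) (N.inv_mem (hT j i _)))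
        (Subgroup.Normal.conj_mem ‹_› _ (N.inv_mem (hT i j _)) _))
  have htop := eq_top_of_nielsen_mem K (fun i j h => hNK (hT i j h)) hIK hPK
  intro g hg
  obtain ⟨k, hk⟩ : g ∈ K := htop ▸ Subgroup.mem_top g
  have hk : q (inversion a ^ k) = q g := (_root_.map_zpow q _ k).trans hk
  have hmem : (inversion a ^ k)⁻¹ * g ∈ N := QuotientGroup.eq.1 hk
  have hdet : detρ n ((inversion a ^ k)⁻¹ * g) = 1 := hle hmem
  rw [_root_.map_mul, show detρ n g = 1 from hg, mul_one, _root_.map_inv, inv_eq_one,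
    _root_.map_zpow, detρ_inversion] at hdet
  rcases Int.even_or_odd k with ⟨r, rfl⟩ | hodd
  · rwa [← two_mul, _root_.zpow_mul, zpow_two, inversion_mul_self, _root_.one_zpow, inv_one, one_mul] at hmem
  · rw [hodd.neg_one_zpow] at hdet
    exact absurd hdet (by decide)

lemma SAut_le_of_double_swap_mem {a b c d : Fin n} (hab : a ≠ b) (hac : a ≠ c) (had : a ≠ d)
    (hbc : b ≠ c) (hbd : b ≠ d) (hN : permAut (Equiv.swap a b * Equiv.swap c d) ∈ N) :
    SAut n ≤ N := by
  have : (SAut n).Normal := MonoidHom.normal_ker _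
  have hT := transv_mem_of_double_swap_mem hab hac had hbc hbd hN
  have hI := inversion_mul_inversion_mem hac had hN
  have hT' : transv c b hbc.symm ∈ N ⊓ SAut n := ⟨hT, detρ_transv hab hac.symm hbc.symm⟩
  have hI' : inversion a * inversion b ∈ N ⊓ SAut n := by
    refine ⟨hI, ?_⟩
    change detρ n _ = 1
    rw [_root_.map_mul, detρ_inversion, detρ_inversion]
    rfl
  exact (SAut_le_of_transv_mem a inf_le_right (transv_mem_of_transv_mem _ hT')
    (inversion_mul_inversion_mem_of_mem hab hI')).trans inf_le_left

end NormalSubgroups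

/-- The permutation of `2 * m` points exchanging `2 * i` and `2 * i + 1` for all `i < m`. -/
def pairSwap (m : ℕ) : Equiv.Perm (Fin (2 * m)) :=
  (finProdFinEquiv.trans (finCongr (mul_comm m 2))).permCongr
    (Equiv.prodCongrRight fun _ => Equiv.swap 0 1)

lemma sign_pairSwap (m : ℕ) : Equiv.Perm.sign (pairSwap m) = (-1) ^ m := by
  rw [pairSwap, Equiv.Perm.sign_permCongr, Equiv.Perm.sign_prodCongrRight]
  simp

lemma pairSwap_apply {m : ℕ} (i : Fin m) {j k : Fin (2 * m)} (hj : j.val = 2 * i.val)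
    (hk : k.val = 2 * i.val + 1) : pairSwap m j = k ∧ pairSwap m k = j := by
  let e : Fin m × Fin 2 ≃ Fin (2 * m) := finProdFinEquiv.trans (finCongr (mul_comm m 2))
  have hσ : ∀ r, pairSwap m (e (i, r)) = e (i, Equiv.swap 0 1 r) := fun r => by
    simp [pairSwap, e]
  obtain rfl : e (i, 0) = j := by ext; simp [e, hj]
  obtain rfl : e (i, 1) = k := by ext; simp [e, hk, add_comm]
  simp [hσ]

lemma eq_permAut_pairSwap {m : ℕ} {f : FrAut (2 * m)}
    (hf : ∀ (i : Fin m) (j k : Fin (2 * m)), j.val = 2 * i.val → k.val = 2 * i.val + 1 →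
      f (of j) = of k ∧ f (of k) = of j) :
    f = permAut (pairSwap m) := by
  refine frAut_ext fun l => ?_
  rw [permAut_of]
  have hl := l.isLt
  rcases Nat.even_or_odd' l.val with ⟨c, hc | hc⟩
  · let i : Fin m := ⟨c, by omega⟩
    have hk : c * 2 + 1 < 2 * m := by omega
    have hk' : (⟨c * 2 + 1, hk⟩ : Fin (2 * m)).val = 2 * i.val + 1 := by simp [i, mul_comm]
    rw [(hf i l _ hc hk').1, (pairSwap_apply i hc hk').1]
  · let i : Fin m := ⟨c, by omega⟩
    have hj : c * 2 < 2 * m := by omega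
    have hj' : (⟨c * 2, hj⟩ : Fin (2 * m)).val = 2 * i.val := by simp [i, mul_comm]
    rw [(hf i _ l hj' hc).2, (pairSwap_apply i hj' hc).2]

lemma SAut_le_normalClosure_permAut_pairSwap {m : ℕ} (hm : 2 ≤ m) :
    SAut (2 * m) ≤ Subgroup.normalClosure {permAut (pairSwap m)} := by
  have hmem : permAut (pairSwap m) ∈ Subgroup.normalClosure {permAut (pairSwap m)} :=
    Subgroup.subset_normalClosure rfl
  set N := Subgroup.normalClosure {permAut (pairSwap m)}
  let p : ∀ k, k < 4 → Fin (2 * m) := fun k hk => ⟨k, by omega⟩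
  have hσ₁ : pairSwap m (p 1 (by omega)) = p 0 (by omega) :=
    (pairSwap_apply ⟨0, by omega⟩ rfl rfl).2
  have hσ₂ : pairSwap m (p 2 (by omega)) = p 3 (by omega) :=
    (pairSwap_apply ⟨1, by omega⟩ rfl rfl).1
  have hN : permAut (Equiv.swap (p 0 (by omega)) (p 3 (by omega)) *
      Equiv.swap (p 1 (by omega)) (p 2 (by omega))) ∈ N := by
    rw [← hσ₁, ← hσ₂, Equiv.swap_apply_apply, _root_.map_mul, _root_.map_mul, _root_.map_mul,
      _root_.map_inv, mul_assoc, mul_assoc]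
    refine N.mul_mem hmem ?_
    rw [← mul_assoc]
    have h := Subgroup.normalClosure_normal.conj_mem _ (N.inv_mem hmem)
      (permAut (Equiv.swap (p 1 (by omega)) (p 2 (by omega))))
    rwa [← _root_.map_inv _ (Equiv.swap _ _), Equiv.swap_inv] at h
  exact SAut_le_of_double_swap_mem (by simp [p]) (by simp [p]) (by simp [p]) (by simp [p])
    (by simp [p]) hN

/-- For even `n = 2m ≥ 4`, if `f ∈ Aut(F_n)` swaps the generators in pairs
(`x_{2i-1} ↔ x_{2i}`), then `N(f) = SAut(F_n)` if `det f̄ = 1` and `N(f) = Aut(F_n)` if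
`det f̄ = -1`; since `det f̄ = (-1)^{n/2}`, this gives `N(f) = SAut(F_n)` when
`n ≡ 0 (mod 4)` and `N(f) = Aut(F_n)` when `n ≡ 2 (mod 4)`. -/
theorem normalClosure_of_pair_swap (m : ℕ) (hm : 2 ≤ m) (f : FrAut (2 * m))
    (hf : ∀ i : Fin m,
      f (FreeGroup.of ⟨2 * i.val, by have := i.isLt; omega⟩) =
        FreeGroup.of ⟨2 * i.val + 1, by have := i.isLt; omega⟩ ∧
      f (FreeGroup.of ⟨2 * i.val + 1, by have := i.isLt; omega⟩) =
        FreeGroup.of ⟨2 * i.val, by have := i.isLt; omega⟩) :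
    ((detρ (2 * m) f = 1 → Subgroup.normalClosure {f} = SAut (2 * m)) ∧
     (detρ (2 * m) f = -1 → Subgroup.normalClosure {f} = ⊤)) ∧
    detρ (2 * m) f = (-1) ^ m ∧
    (Even m → Subgroup.normalClosure {f} = SAut (2 * m)) ∧
    (¬ Even m → Subgroup.normalClosure {f} = ⊤) := by
  have hfσ : f = permAut (pairSwap m) := eq_permAut_pairSwap fun i j k hj hk => by
    obtain ⟨j, _⟩ := j
    obtain ⟨k, _⟩ := k
    subst hj hk
    exact hf i
  have hle : SAut (2 * m) ≤ Subgroup.normalClosure {f} :=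
    hfσ ▸ SAut_le_normalClosure_permAut_pairSwap hm
  have hdet : detρ (2 * m) f = (-1) ^ m := by
    rw [hfσ, detρ_permAut, sign_pairSwap]
  have h₁ : detρ (2 * m) f = 1 → Subgroup.normalClosure {f} = SAut (2 * m) := by
    intro h
    have : (SAut (2 * m)).Normal := MonoidHom.normal_ker _
    exact le_antisymm (Subgroup.normalClosure_le_normal (Set.singleton_subset_iff.2 h)) hle
  have h₂ : detρ (2 * m) f = -1 → Subgroup.normalClosure {f} = ⊤ := by
    refine fun h => (Subgroup.eq_top_iff' _).2 fun g => ?_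
    have hf : f ∈ Subgroup.normalClosure {f} := Subgroup.subset_normalClosure rfl
    rcases Int.units_eq_one_or (detρ (2 * m) g) with hg | hg
    · exact hle hg
    · rw [← Subgroup.mul_mem_cancel_right _ hf]
      refine hle ?_
      change detρ (2 * m) (g * f) = 1
      rw [_root_.map_mul, hg, h]
      rfl
  exact ⟨⟨h₁, h₂⟩, hdet, fun hm => h₁ (hdet.trans hm.neg_one_pow),
    fun hm => h₂ (hdet.trans (Nat.not_even_iff_odd.1 hm).neg_one_pow)⟩

end NormalClosurePaper
end

section
/- Let g ∈ Aut(F_4) be the automorphism determined by g(x_1) = x_2, g(x_2) = x_3, g(x_3) = x_4 x_1 x_4^{-1}, g(x_4) = x_4, and let ḡ denote its image in Out(F_4). Then ḡ has order 3, and no element of Aut(F_4) of finite order projects to ḡ under the quotient map Aut(F_4) → Out(F_4); that is, every h ∈ Aut(F_4) whose image in Out(F_4) equals ḡ has infinite order. -/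
open Matrix

namespace NormalClosurePaper

/-- An element of a free group that commutes with a generator `x_j` has exponent sum zero in every
other generator: this is visible in the affine group of `ℚ`, with `x_i` acting as `t ↦ 2 t`
and `x_j` as `t ↦ t + 1`. -/
lemma expSum_eq_one_of_commute {n : ℕ} {i j : Fin n} (hij : j ≠ i) {w : FreeGroup (Fin n)}
    (hw : Commute w (FreeGroup.of j)) : expSum i w = 1 := by
  let φ : FreeGroup (Fin n) →* Equiv.Perm ℚ := FreeGroup.lift fun k =>
    if k = i then Equiv.mulLeft₀ (2 : ℚ) two_ne_zero
    else if k = j then Equiv.addRight 1 else 1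
  have key (v : FreeGroup (Fin n)) : ∀ a b : ℚ, φ v a - φ v b =
      (2 : ℚ) ^ (expSum i v).toAdd * (a - b) := by
    induction v using FreeGroup.induction_on with
    | C1 => simp
    | of k =>
      intro a b
      by_cases hi : k = i
      · simp [φ, expSum, hi, mul_sub]
      · by_cases hj : k = j <;> simp [φ, expSum, hi, hj, hij]
    | inv_of k ih =>
      intro a b
      have h := ih (φ (FreeGroup.of k)⁻¹ a) (φ (FreeGroup.of k)⁻¹ b)
      simp only [_root_.map_inv, Equiv.Perm.inv_def, Equiv.apply_symm_apply] at h ⊢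
      rw [h, toAdd_inv, _root_.zpow_neg, inv_mul_cancel_left₀ (zpow_ne_zero _ two_ne_zero)]
    | mul x y ihx ihy =>
      intro a b
      rw [_root_.map_mul, _root_.map_mul, toAdd_mul, Equiv.Perm.mul_apply, Equiv.Perm.mul_apply,
        ihx, ihy, zpow_add₀ two_ne_zero, mul_assoc]
  have hj (t : ℚ) : φ (FreeGroup.of j) t = t + 1 := by simp [φ, hij]
  have hcomm : φ w (0 + 1) = φ w 0 + 1 := by
    have h := DFunLike.congr_fun (hw.map φ).eq (0 : ℚ)
    rwa [Equiv.Perm.mul_apply, Equiv.Perm.mul_apply, hj, hj] at h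
  have h2 : (2 : ℚ) ^ (expSum i w).toAdd = 1 := by
    have h := key w (0 + 1) 0
    rw [hcomm] at h
    linarith
  exact Multiplicative.toAdd.injective
    ((zpow_eq_one_iff_right₀ (by norm_num) (by norm_num)).mp h2)

lemma mul_conj_eq {n : ℕ} (f : FrAut n) (a : FreeGroup (Fin n)) :
    f * MulAut.conj a = MulAut.conj (f a) * f := by
  ext y
  simp [MulAut.conj_apply, MulAut.mul_apply]

/-- An automorphism of a free group is determined by its values on the generators. -/
lemma frAut_ext_s19 {n : ℕ} {f f' : FrAut n}
    (h : ∀ k, f (FreeGroup.of k) = f' (FreeGroup.of k)) : f = f' :=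
  MulEquiv.toMonoidHom_injective (FreeGroup.ext_hom _ _ h)

/-- An inner automorphism of finite order is given by an element of exponent sum zero. -/
lemma expSum_eq_one_of_isOfFinOrder_conj {n : ℕ} (hn : 2 ≤ n) {u : FreeGroup (Fin n)}
    (hu : IsOfFinOrder (MulAut.conj u)) (i : Fin n) : expSum i u = 1 := by
  obtain ⟨m, hm, hpow⟩ := isOfFinOrder_iff_pow_eq_one.mp hu
  have : Nontrivial (Fin n) := Fin.nontrivial_iff_two_le.mpr hn
  obtain ⟨j, hj⟩ := exists_ne i
  have hc : Commute (u ^ m) (FreeGroup.of j) := by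
    rw [← _root_.map_pow] at hpow
    have h := DFunLike.congr_fun hpow (FreeGroup.of j)
    rw [MulAut.conj_apply, MulAut.one_apply] at h
    exact mul_inv_eq_iff_eq_mul.mp h
  have h := expSum_eq_one_of_commute hj hc
  rw [_root_.map_pow] at h
  exact (pow_eq_one_iff_left hm.ne').mp h

/-- The outer automorphism `ḡ` of `F_4` induced by `g : x_1 ↦ x_2, x_2 ↦ x_3,
x_3 ↦ x_4 x_1 x_4⁻¹, x_4 ↦ x_4` has order 3, yet no finite order element of `Aut(F_4)`
projects to `ḡ`. -/
theorem out_order_three_without_finite_order_lift (g : FrAut 4)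
    (h1 : g (FreeGroup.of 0) = FreeGroup.of 1)
    (h2 : g (FreeGroup.of 1) = FreeGroup.of 2)
    (h3 : g (FreeGroup.of 2) = FreeGroup.of 3 * FreeGroup.of 0 * (FreeGroup.of 3)⁻¹)
    (h4 : g (FreeGroup.of 3) = FreeGroup.of 3) :
    orderOf (toOut 4 g) = 3 ∧
    ∀ h : FrAut 4, toOut 4 h = toOut 4 g → ¬ IsOfFinOrder h := by
  have hcube : g ^ 3 = MulAut.conj (FreeGroup.of 3) := by
    refine frAut_ext_s19 fun k => ?_
    fin_cases k <;> simp [pow_succ, MulAut.mul_apply, MulAut.conj_apply, h1, h2, h3, h4]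
  refine ⟨orderOf_eq_prime ?_ ?_, ?_⟩
  · rw [← _root_.map_pow, hcube]
    exact (QuotientGroup.eq_one_iff _).mpr ⟨_, rfl⟩
  · intro h
    obtain ⟨a, ha⟩ := (QuotientGroup.eq_one_iff g).mp h
    have hmat := congrFun₂ (mat_conj a) 0 0
    rw [ha] at hmat
    simp [mat, h1, expSum] at hmat
  · intro h hh hfin
    obtain ⟨a, ha⟩ := QuotientGroup.eq.mp hh.symm
    obtain rfl : h = g * MulAut.conj a := by rw [ha, mul_inv_cancel_left]
    have hexp (w : FreeGroup (Fin 4)) : expSum 3 (g w) = expSum 3 w := by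
      suffices (expSum 3).comp g.toMonoidHom = expSum 3 from DFunLike.congr_fun this w
      refine FreeGroup.ext_hom _ _ fun k => ?_
      fin_cases k <;> simp [h1, h2, h3, h4, expSum]
    have hlift : (g * MulAut.conj a) ^ 3 =
        MulAut.conj (g a * g (g a) * g (g (g a)) * FreeGroup.of 3) := by
      rw [_root_.map_mul, ← hcube, mul_conj_eq]
      simp only [_root_.map_mul, pow_succ, pow_zero, one_mul, mul_assoc]
      simp only [← mul_assoc g, mul_conj_eq]
      simp only [mul_assoc]
      simp only [← mul_assoc g, mul_conj_eq]
      simp only [mul_assoc]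
    have hu := expSum_eq_one_of_isOfFinOrder_conj (by norm_num) (hlift ▸ hfin.pow) 3
    have h0 := congrArg Multiplicative.toAdd hu
    have hx : (expSum (3 : Fin 4) (FreeGroup.of 3)).toAdd = 1 := by simp [expSum]
    simp only [_root_.map_mul, hexp, toAdd_mul, toAdd_one, hx] at h0
    omega

end NormalClosurePaper
end
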